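/- arXiv:1909.05850 — 4 statements merged into one kernel-verified Lean document; each statement's English description precedes it below -/
import Mathlib

section
/- (Direct-method identity.) Define r̄_e(s) = ∫_A r̄(s,a) dπ_e(s)(a) and the value function v(s) = Σ_{k=0}^∞ γ^k ∫_S r̄_e(s') d((δ_s).bind K_e^k)(s'), where δ_s is the Dirac measure at s. Then v is measurable with 0 ≤ v ≤ R_max/(1−γ), and ∫_S r̄_e d d_γ = (1−γ) · ∫_S v dμ_e; that is, the policy value ρ^{π_e} equals (1−γ)·E_{μ_e}[v(s_0)]. -/
open MeasureTheory ProbabilityTheory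
open scoped ENNReal

noncomputable section

variable {S A : Type*} [MeasurableSpace S] [MeasurableSpace A]

/-- `t`-fold composition of a Markov kernel with itself. -/
def kpow {α : Type*} [MeasurableSpace α] (K : Kernel α α) : ℕ → Kernel α α
  | 0 => Kernel.id
  | n + 1 => K ∘ₖ kpow K n

/-- The state-transition kernel induced by a policy `π`. -/
def stateKernel (P : Kernel (S × A) S) (π : Kernel S A) [IsSFiniteKernel π] :
    Kernel S S :=
  P ∘ₖ (Kernel.id ×ₖ π)

/-- The discounted average visitation measure. -/
def dgamma (γ : ℝ) (μe : Measure S) (Ke : Kernel S S) : Measure S :=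
  ENNReal.ofReal (1 - γ) •
    Measure.sum fun t : ℕ => ENNReal.ofReal γ ^ t • μe.bind fun s => kpow Ke t s

/- The discounted average visitation measure is linear in the initial distribution: it is
`μ` composed with the kernel sending `s` to the visitation measure of the chain started at `s`.
Integrating the reward against that kernel at `s` gives `(1 - γ) v(s)`, so the identity is the
disintegration formula for a composition. The kernel is moreover Markov, so `(1 - γ) v(s)` is an
average of rewards and satisfies the same bounds as they do. -/

open Set

instance kpow.instIsMarkovKernel (K : Kernel S S) [IsMarkovKernel K] (n : ℕ) :
    IsMarkovKernel (kpow K n) := by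
  induction n with
  | zero => exact inferInstanceAs (IsMarkovKernel Kernel.id)
  | succ n _ => exact inferInstanceAs (IsMarkovKernel (K ∘ₖ kpow K n))

instance stateKernel.instIsMarkovKernel (P : Kernel (S × A) S) [IsMarkovKernel P]
    (π : Kernel S A) [IsMarkovKernel π] : IsMarkovKernel (stateKernel P π) :=
  inferInstanceAs (IsMarkovKernel (P ∘ₖ (Kernel.id ×ₖ π)))

lemma integral_mem_Icc_of_ae_mem_Icc {μ : Measure S} [IsProbabilityMeasure μ] {f : S → ℝ}
    {a b : ℝ} (hf : AEMeasurable f μ) (hab : ∀ᵐ x ∂μ, f x ∈ Icc a b) :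
    ∫ x, f x ∂μ ∈ Icc a b :=
  (convex_Icc a b).integral_mem isClosed_Icc hab (.of_mem_Icc a b hf hab)

/-- The mean reward `r̄_π(s) = ∫ r̄(s, a) dπ(s)(a)` of the policy `π` at a state, where
`r̄(s, a)` is the mean of the reward distribution `R (s, a)`. -/
def meanReward (R : Kernel (S × A) ℝ) (π : Kernel S A) (s : S) : ℝ :=
  ∫ a, ∫ r, r ∂(R (s, a)) ∂(π s)

lemma stronglyMeasurable_integral_id_kernel (R : Kernel S ℝ) :
    StronglyMeasurable fun s => ∫ r, r ∂(R s) :=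
  stronglyMeasurable_id.integral_kernel

lemma measurable_meanReward (R : Kernel (S × A) ℝ) (π : Kernel S A) [IsSFiniteKernel π] :
    Measurable (meanReward R π) :=
  (stronglyMeasurable_integral_id_kernel R).integral_kernel_prod_right'.measurable

lemma meanReward_mem_Icc {R : Kernel (S × A) ℝ} [IsMarkovKernel R] {π : Kernel S A}
    [IsMarkovKernel π] {a b : ℝ} (hR : ∀ p, ∀ᵐ r ∂(R p), r ∈ Icc a b) (s : S) :
    meanReward R π s ∈ Icc a b :=
  integral_mem_Icc_of_ae_mem_Icc
    ((stronglyMeasurable_integral_id_kernel R).measurable.comp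
      measurable_prodMk_left).aemeasurable
    (.of_forall fun x => integral_mem_Icc_of_ae_mem_Icc aemeasurable_id (hR (s, x)))

section Visitation

variable {γ : ℝ} {μ : Measure S} {K : Kernel S S}

lemma dgamma_apply {B : Set S} (hB : MeasurableSet B) :
    dgamma γ μ K B =
      ENNReal.ofReal (1 - γ) * ∑' t : ℕ, ENNReal.ofReal γ ^ t * ∫⁻ s, kpow K t s B ∂μ := by
  simp [dgamma, Measure.sum_apply _ hB, Measure.bind_apply hB (kpow K _).aemeasurable]

lemma dgamma_univ [IsMarkovKernel K] (hγ0 : 0 ≤ γ) (hγ1 : γ < 1) :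
    dgamma γ μ K univ = μ univ := by
  have hpos : ENNReal.ofReal (1 - γ) ≠ 0 := by simpa using hγ1
  have hgeom : ∑' t : ℕ, ENNReal.ofReal γ ^ t = (ENNReal.ofReal (1 - γ))⁻¹ := by
    rw [ENNReal.tsum_geometric, ENNReal.ofReal_sub 1 hγ0, ENNReal.ofReal_one]
  simp only [dgamma_apply .univ, measure_univ, lintegral_one, ENNReal.tsum_mul_right, hgeom]
  rw [← mul_assoc, ENNReal.mul_inv_cancel hpos ENNReal.ofReal_ne_top, one_mul]

/-- The kernel sending a state `s` to the discounted average visitation measure of the chain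
started at `s`. -/
def visitationKernel (γ : ℝ) (K : Kernel S S) : Kernel S S where
  toFun s := dgamma γ (.dirac s) K
  measurable' := by
    refine Measure.measurable_of_measurable_coe _ fun B hB => ?_
    simp only [dgamma_apply hB, lintegral_dirac' _ ((kpow K _).measurable_coe hB)]
    exact (Measurable.tsum fun t => ((kpow K t).measurable_coe hB).const_mul _).const_mul _

lemma visitationKernel_apply (s : S) : visitationKernel γ K s = dgamma γ (.dirac s) K := rfl

lemma isMarkovKernel_visitationKernel [IsMarkovKernel K] (hγ0 : 0 ≤ γ) (hγ1 : γ < 1) :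
    IsMarkovKernel (visitationKernel γ K) where
  isProbabilityMeasure s := ⟨by rw [visitationKernel_apply, dgamma_univ hγ0 hγ1, measure_univ]⟩

lemma visitationKernel_comp : visitationKernel γ K ∘ₘ μ = dgamma γ μ K := by
  ext B hB
  have hmeas (t : ℕ) : Measurable fun s => kpow K t s B := (kpow K t).measurable_coe hB
  simp only [Measure.bind_apply hB (visitationKernel γ K).aemeasurable, visitationKernel_apply,
    dgamma_apply hB, lintegral_dirac' _ (hmeas _)]
  rw [lintegral_const_mul _ (.tsum fun t => (hmeas t).const_mul _),
    lintegral_tsum fun t => ((hmeas t).const_mul _).aemeasurable]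
  simp only [lintegral_const_mul _ (hmeas _)]

end Visitation

section DiscountedValue

variable {E : Type*} [NormedAddCommGroup E] [NormedSpace ℝ E]
  {γ : ℝ} {μ : Measure S} {K : Kernel S S}

/-- The value function `v(s) = ∑ γ ^ k 𝔼[f(s_k) | s_0 = s]` of the Markov chain with transition
kernel `K` and reward `f`. It takes the junk value `0` where the series diverges. -/
def discountedValue (γ : ℝ) (K : Kernel S S) (f : S → E) (s : S) : E :=
  ∑' k : ℕ, γ ^ k • ∫ s', f s' ∂kpow K k s

lemma integral_visitationKernel {f : S → E} {s : S} (hγ0 : 0 ≤ γ) (hγ1 : γ < 1)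
    (hf : Integrable f (visitationKernel γ K s)) :
    ∫ s', f s' ∂visitationKernel γ K s = (1 - γ) • discountedValue γ K f s := by
  have hpos : ENNReal.ofReal (1 - γ) ≠ 0 := by simpa using hγ1
  rw [visitationKernel_apply, dgamma] at hf ⊢
  rw [integrable_smul_measure hpos ENNReal.ofReal_ne_top] at hf
  rw [integral_smul_measure, integral_sum_measure hf, ENNReal.toReal_ofReal (sub_pos.2 hγ1).le]
  simp only [discountedValue, integral_smul_measure, ENNReal.toReal_pow,
    ENNReal.toReal_ofReal hγ0, Measure.dirac_bind (kpow K _).measurable]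

lemma discountedValue_eq_inv_smul_integral {f : S → E} {s : S} (hγ0 : 0 ≤ γ) (hγ1 : γ < 1)
    (hf : Integrable f (visitationKernel γ K s)) :
    discountedValue γ K f s = (1 - γ)⁻¹ • ∫ s', f s' ∂visitationKernel γ K s := by
  rw [integral_visitationKernel hγ0 hγ1 hf, inv_smul_smul₀ (sub_pos.2 hγ1).ne']

lemma stronglyMeasurable_discountedValue {f : S → E} (hγ0 : 0 ≤ γ) (hγ1 : γ < 1)
    (hf : StronglyMeasurable f) (hfi : ∀ s, Integrable f (visitationKernel γ K s)) :
    StronglyMeasurable (discountedValue γ K f) := by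
  have heq : discountedValue γ K f =
      fun s => (1 - γ)⁻¹ • ∫ s', f s' ∂visitationKernel γ K s :=
    funext fun s => discountedValue_eq_inv_smul_integral hγ0 hγ1 (hfi s)
  exact heq ▸ hf.integral_kernel.const_smul _

lemma discountedValue_mem_Icc [IsMarkovKernel K] {f : S → ℝ} {a b : ℝ} (hγ0 : 0 ≤ γ)
    (hγ1 : γ < 1) (hf : Measurable f) (hab : ∀ s, f s ∈ Icc a b) (s : S) :
    discountedValue γ K f s ∈ Icc (a / (1 - γ)) (b / (1 - γ)) := by
  have := isMarkovKernel_visitationKernel (K := K) hγ0 hγ1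
  have hmean : ∫ s', f s' ∂visitationKernel γ K s ∈ Icc a b :=
    integral_mem_Icc_of_ae_mem_Icc hf.aemeasurable (.of_forall hab)
  rw [integral_visitationKernel hγ0 hγ1 (.of_mem_Icc a b hf.aemeasurable (.of_forall hab)),
    smul_eq_mul] at hmean
  have hpos : 0 < 1 - γ := sub_pos.2 hγ1
  exact ⟨(div_le_iff₀' hpos).2 hmean.1, (le_div_iff₀' hpos).2 hmean.2⟩

theorem integral_dgamma {f : S → E} (hγ0 : 0 ≤ γ) (hγ1 : γ < 1)
    (hf : Integrable f (dgamma γ μ K)) :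
    ∫ s, f s ∂dgamma γ μ K = (1 - γ) • ∫ s, discountedValue γ K f s ∂μ := by
  rw [← visitationKernel_comp] at hf ⊢
  calc ∫ s, f s ∂(visitationKernel γ K ∘ₘ μ)
      = ∫ s, ∫ s', f s' ∂visitationKernel γ K s ∂μ :=
        Kernel.integral_comp (κ := Kernel.const Unit μ) (a := ()) hf
    _ = ∫ s, (1 - γ) • discountedValue γ K f s ∂μ := integral_congr_ae <|
        (Measure.ae_integrable_of_integrable_comp hf).mono fun _ hs =>
          integral_visitationKernel hγ0 hγ1 hs
    _ = (1 - γ) • ∫ s, discountedValue γ K f s ∂μ := integral_smul _ _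

end DiscountedValue

theorem direct_method_identity_general {K : Kernel S S} [IsMarkovKernel K] {μ : Measure S}
    [IsFiniteMeasure μ] {γ : ℝ} (hγ0 : 0 ≤ γ) (hγ1 : γ < 1) {f : S → ℝ} (hf : Measurable f)
    {a b : ℝ} (hab : ∀ s, f s ∈ Icc a b) :
    Measurable (discountedValue γ K f) ∧
      (∀ s, discountedValue γ K f s ∈ Icc (a / (1 - γ)) (b / (1 - γ))) ∧
      ∫ s, f s ∂dgamma γ μ K = (1 - γ) * ∫ s, discountedValue γ K f s ∂μ := by
  have := isMarkovKernel_visitationKernel (K := K) hγ0 hγ1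
  have : IsFiniteMeasure (dgamma γ μ K) := ⟨by simp [dgamma_univ hγ0 hγ1]⟩
  have hint (ν : Measure S) [IsFiniteMeasure ν] : Integrable f ν :=
    .of_mem_Icc a b hf.aemeasurable (.of_forall hab)
  exact ⟨(stronglyMeasurable_discountedValue hγ0 hγ1 hf.stronglyMeasurable
      fun _ => hint _).measurable,
    discountedValue_mem_Icc hγ0 hγ1 hf hab, integral_dgamma hγ0 hγ1 (hint _)⟩

/-- direct-method identity: the value function
`v(s) = Σ_k γ^k ∫ r̄_e d((δ_s).bind K_e^k)` is measurable, takes values in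
`[0, R_max/(1−γ)]`, and `∫ r̄_e d d_γ = (1−γ)·∫ v dμ_e`. -/
theorem direct_method_identity
    (P : Kernel (S × A) S) [IsMarkovKernel P]
    (Rmax : ℝ) (hRmax : 0 < Rmax)
    (R : Kernel (S × A) ℝ) [IsMarkovKernel R]
    (hR : ∀ p : S × A, R p (Set.Icc (0 : ℝ) Rmax)ᶜ = 0)
    (γ : ℝ) (hγ0 : 0 < γ) (hγ1 : γ < 1)
    (πe πb : Kernel S A) [IsMarkovKernel πe] [IsMarkovKernel πb]
    (μe μb : Measure S) [IsProbabilityMeasure μe] [IsProbabilityMeasure μb]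
    -- the mean reward of the target policy at a state
    (rbarE : S → ℝ)
    (hrbarE : ∀ s, rbarE s = ∫ a, (∫ r, r ∂(R (s, a))) ∂(πe s))
    -- the value function
    (v : S → ℝ)
    (hv : ∀ s, v s = ∑' k : ℕ, γ ^ k *
      ∫ s', rbarE s' ∂((Measure.dirac s).bind fun u => kpow (stateKernel P πe) k u)) :
    Measurable v ∧
      (∀ s, 0 ≤ v s ∧ v s ≤ Rmax / (1 - γ)) ∧
      ∫ s, rbarE s ∂(dgamma γ μe (stateKernel P πe)) = (1 - γ) * ∫ s, v s ∂μe := by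
  obtain rfl : rbarE = meanReward R πe := funext hrbarE
  obtain rfl : v = discountedValue γ (stateKernel P πe) (meanReward R πe) := funext fun s => by
    simp only [hv, discountedValue, Measure.dirac_bind (kpow _ _).measurable, smul_eq_mul]
  simpa only [mem_Icc, zero_div] using direct_method_identity_general (μ := μe) hγ0.le hγ1
    (measurable_meanReward R πe) (meanReward_mem_Icc hR)

end
end

section
/- (Martingale structure of the efficient estimating function along trajectories.) For every t ≥ 0, E_{P_b}[φ(s_t, a_t, r_t, s_{t+1})] = 0, and for every t ≥ 1, E_{P_b}[φ(s_0, a_0, r_0, s_1) · φ(s_t, a_t, r_t, s_{t+1})] = 0. -/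
open MeasureTheory ProbabilityTheory
open scoped ENNReal

noncomputable section

variable {S A : Type*} [MeasurableSpace S] [MeasurableSpace A]

/-- The law of the initial triple `(s₀, a₀, r₀)` under the behavior policy. -/
def initLaw (R : Kernel (S × A) ℝ) (πb : Kernel S A) (μb : Measure S) :
    Measure (S × A × ℝ) :=
  μb.bind fun s => (πb s).bind fun a => (R (s, a)).map fun r => (s, a, r)

/-- The one-step transition of the behavior trajectory: from `(s, a, r)` draw
`s' ~ P (s, a)`, `a' ~ π_b s'`, `r' ~ R (s', a')` and return `(s', a', r')`. -/
def stepLaw (P : Kernel (S × A) S) (R : Kernel (S × A) ℝ) (πb : Kernel S A)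
    (x : S × A × ℝ) : Measure (S × A × ℝ) :=
  (P (x.1, x.2.1)).bind fun s' => (πb s').bind fun a' =>
    (R (s', a')).map fun r' => (s', a', r')

/-- The law of the length-`(n+1)` prefix `((s₀,a₀,r₀), …, (sₙ,aₙ,rₙ))` of the behavior
trajectory. -/
def finLaw (P : Kernel (S × A) S) (R : Kernel (S × A) ℝ) (πb : Kernel S A)
    (μb : Measure S) : (n : ℕ) → Measure (Fin (n + 1) → S × A × ℝ)
  | 0 => (initLaw R πb μb).map fun x => fun _ => x
  | n + 1 => (finLaw P R πb μb n).bind fun path =>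
      (stepLaw P R πb (path (Fin.last n))).map (Fin.snoc path)

/-- The transition observed at time `t` along a trajectory: `(s_t, a_t, r_t, s_{t+1})`. -/
def Xt (t : ℕ) (ω : ℕ → S × A × ℝ) : S × A × ℝ × S :=
  ((ω t).1, (ω t).2.1, (ω t).2.2, (ω (t + 1)).1)

/-!
By the Bellman equation, `φ(s_t, a_t, r_t, s_{t+1})` is the sum of two noises weighted by
`u(s_t, a_t) = w(s_t) η(s_t, a_t)`: the reward noise `r_t - r̄(s_t, a_t)`, and `γ` times the
transition noise `v(s_{t+1}) - E[v(s_{t+1}) | s_t, a_t]`. Under the trajectory law the first is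
centred given `(s_t, a_t)` and the earlier observations, the second given the observations up to
and including time `t`. Both are therefore orthogonal to every integrable function of the earlier
observations and `s_t`; the constant `1` and the values of `φ` at earlier times are such functions.
-/

section NormBounds

variable {β E : Type*} [MeasurableSpace β] [NormedAddCommGroup E] {ν : Measure β} {f : β → E}

lemma lintegral_enorm_le_of_norm_le [IsProbabilityMeasure ν] {B : ℝ} (hB : ∀ᵐ y ∂ν, ‖f y‖ ≤ B) :
    ∫⁻ y, ‖f y‖ₑ ∂ν ≤ B.toNNReal :=
  calc ∫⁻ y, ‖f y‖ₑ ∂ν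
      ≤ ∫⁻ _, B.toNNReal ∂ν := lintegral_mono_ae <| hB.mono fun y hy => by
        rw [← ofReal_norm]
        exact ENNReal.ofReal_le_ofReal hy
    _ = B.toNNReal := by simp

lemma norm_integral_le_of_lintegral_enorm_le [NormedSpace ℝ E] {C : NNReal}
    (hC : ∫⁻ y, ‖f y‖ₑ ∂ν ≤ C) : ‖∫ y, f y ∂ν‖ ≤ C := by
  rw [← coe_nnnorm, NNReal.coe_le_coe, ← ENNReal.coe_le_coe]
  exact (enorm_integral_le_lintegral_enorm f).trans hC

end NormBounds

section CondDistrib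

variable {Ω α β γ : Type*} [MeasurableSpace Ω] [mα : MeasurableSpace α] [MeasurableSpace β]
  [MeasurableSpace γ]

lemma map_compProd_eq_bind (μ : Measure α) [SFinite μ] (κ : Kernel α β) [IsSFiniteKernel κ]
    {f : α × β → γ} (hf : Measurable f) :
    (μ ⊗ₘ κ).map f = μ.bind fun x => (κ x).map fun y => f (x, y) := by
  rw [Measure.compProd_eq_comp_prod, Measure.map_comp _ _ hf]
  congr with x : 1
  rw [Kernel.map_apply _ hf, Kernel.prod_apply, Kernel.id_apply, Measure.dirac_prod,
    Measure.map_map hf measurable_prodMk_left]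
  rfl

lemma prodMkLeft_compProd (κ : Kernel α β) [IsSFiniteKernel κ] (η : Kernel (α × β) γ)
    [IsSFiniteKernel η] :
    (κ ⊗ₖ η).prodMkLeft Ω =
      κ.prodMkLeft Ω ⊗ₖ η.comap (fun x : (Ω × α) × β => (x.1.2, x.2)) (by fun_prop) := by
  ext x : 1
  rw [Kernel.prodMkLeft_apply, Kernel.compProd_apply_eq_compProd_sectR,
    Kernel.compProd_apply_eq_compProd_sectR]
  rfl

variable {μ : Measure Ω} {X : Ω → α} {Y : Ω → β} {Z : Ω → ℝ} {κ : Kernel α β}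
  {f : β → ℝ} {C : NNReal}

/-- A centred random variable. Integrability is part of the notion, so that the vanishing integral
is never the junk value of the Bochner integral. -/
structure IsCentered (f : Ω → ℝ) (μ : Measure Ω) : Prop where
  integrable : Integrable f μ
  integral_eq_zero : ∫ ω, f ω ∂μ = 0

lemma IsCentered.add {f g : Ω → ℝ} (hf : IsCentered f μ) (hg : IsCentered g μ) :
    IsCentered (fun ω => f ω + g ω) μ where
  integrable := hf.integrable.add hg.integrable
  integral_eq_zero := by
    rw [integral_add hf.integrable hg.integrable, hf.integral_eq_zero, hg.integral_eq_zero,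
      add_zero]

lemma IsCentered.const_mul {f : Ω → ℝ} (hf : IsCentered f μ) (c : ℝ) :
    IsCentered (fun ω => c * f ω) μ where
  integrable := hf.integrable.const_mul c
  integral_eq_zero := by rw [integral_const_mul, hf.integral_eq_zero, mul_zero]

lemma integrable_mul_of_hasCondDistrib [SFinite μ] [IsSFiniteKernel κ]
    (h : HasCondDistrib Y X κ μ) (hZ : Measurable[mα.comap X] Z) (hZ_int : Integrable Z μ)
    (hf : Measurable f) (hC : ∀ x, ∫⁻ y, ‖f y‖ₑ ∂(κ x) ≤ C) :
    Integrable (fun ω => Z ω * f (Y ω)) μ := by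
  obtain ⟨g, hg, rfl⟩ := hZ.exists_eq_measurable_comp
  have hX := h.aemeasurable_fst
  have hXY : AEMeasurable (fun ω => (X ω, Y ω)) μ := h.aemeasurable
  have hgf : Measurable fun p : α × β => g p.1 * f p.2 := by fun_prop
  refine ⟨(hgf.comp_aemeasurable hXY).aestronglyMeasurable, ?_⟩
  calc ∫⁻ ω, ‖g (X ω) * f (Y ω)‖ₑ ∂μ
      = ∫⁻ x, ∫⁻ y, ‖g x * f y‖ₑ ∂(κ x) ∂(μ.map X) := by
        rw [← Measure.lintegral_compProd hgf.enorm, ← h.map_eq, lintegral_map' (by fun_prop) hXY]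
    _ ≤ ∫⁻ x, C * ‖g x‖ₑ ∂(μ.map X) := by
        refine lintegral_mono fun x => ?_
        simp only [enorm_mul]
        rw [lintegral_const_mul _ hf.enorm, mul_comm]
        gcongr
        exact hC x
    _ < ∞ := by
        rw [lintegral_const_mul _ hg.enorm, lintegral_map' (by fun_prop) hX]
        exact ENNReal.mul_lt_top ENNReal.coe_lt_top hZ_int.hasFiniteIntegral

lemma integral_mul_of_hasCondDistrib [SFinite μ] [IsSFiniteKernel κ]
    (h : HasCondDistrib Y X κ μ) (hZ : Measurable[mα.comap X] Z) (hZ_int : Integrable Z μ)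
    (hf : Measurable f) (hC : ∀ x, ∫⁻ y, ‖f y‖ₑ ∂(κ x) ≤ C) :
    ∫ ω, Z ω * f (Y ω) ∂μ = ∫ ω, Z ω * ∫ y, f y ∂(κ (X ω)) ∂μ := by
  have h_int := integrable_mul_of_hasCondDistrib h hZ hZ_int hf hC
  obtain ⟨g, hg, rfl⟩ := hZ.exists_eq_measurable_comp
  have hXY : AEMeasurable (fun ω => (X ω, Y ω)) μ := h.aemeasurable
  have hκf : Measurable fun x => ∫ y, f y ∂(κ x) := hf.stronglyMeasurable.integral_kernel.measurable
  calc ∫ ω, g (X ω) * f (Y ω) ∂μ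
      = ∫ p, g p.1 * f p.2 ∂(μ.map X ⊗ₘ κ) := by
        rw [← h.map_eq, integral_map hXY (by fun_prop)]
    _ = ∫ x, g x * ∫ y, f y ∂(κ x) ∂(μ.map X) := by
        rw [Measure.integral_compProd]
        · simp only [integral_const_mul]
        · rwa [← h.map_eq, integrable_map_measure (by fun_prop) hXY]
    _ = ∫ ω, g (X ω) * ∫ y, f y ∂(κ (X ω)) ∂μ :=
        integral_map h.aemeasurable_fst (by fun_prop)

lemma integrable_mul_integral_of_hasCondDistrib (h : HasCondDistrib Y X κ μ)
    (hZ_int : Integrable Z μ) (hf : Measurable f) (hC : ∀ x, ∫⁻ y, ‖f y‖ₑ ∂(κ x) ≤ C) :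
    Integrable (fun ω => Z ω * ∫ y, f y ∂(κ (X ω))) μ := by
  have hκf : Measurable fun x => ∫ y, f y ∂(κ x) := hf.stronglyMeasurable.integral_kernel.measurable
  have hX := h.aemeasurable_fst
  exact hZ_int.mul_bdd (hκf.comp_aemeasurable hX).aestronglyMeasurable
    (ae_of_all _ fun ω => norm_integral_le_of_lintegral_enorm_le (hC (X ω)))

lemma isCentered_mul_sub_of_hasCondDistrib [SFinite μ] [IsSFiniteKernel κ]
    (h : HasCondDistrib Y X κ μ) (hZ : Measurable[mα.comap X] Z) (hZ_int : Integrable Z μ)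
    (hf : Measurable f) (hC : ∀ x, ∫⁻ y, ‖f y‖ₑ ∂(κ x) ≤ C) :
    IsCentered (fun ω => Z ω * (f (Y ω) - ∫ y, f y ∂(κ (X ω)))) μ := by
  have h_int := integrable_mul_of_hasCondDistrib h hZ hZ_int hf hC
  have h_int' := integrable_mul_integral_of_hasCondDistrib h hZ_int hf hC
  simp only [mul_sub]
  refine ⟨h_int.sub h_int', ?_⟩
  rw [integral_sub h_int h_int', integral_mul_of_hasCondDistrib h hZ hZ_int hf hC, sub_self]

end CondDistrib

section Trajectory

/-- The observations made strictly before time `t` along a trajectory. -/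
def past {X : Type*} (t : ℕ) (ω : ℕ → X) : Fin t → X := fun i => ω i

@[fun_prop]
lemma measurable_past {X : Type*} [MeasurableSpace X] (t : ℕ) :
    Measurable (past t : (ℕ → X) → Fin t → X) :=
  measurable_pi_lambda _ fun i => measurable_pi_apply (i : ℕ)

/-- The conditional law of `s_t` given the past: the initial law `μ` at time `0`, and afterwards
the transition kernel at the last observed state-action pair. -/
def stateGivenPast (P : Kernel (S × A) S) (μ : Measure S) :
    (t : ℕ) → Kernel (Fin t → S × A × ℝ) S
  | 0 => Kernel.const _ μ
  | n + 1 => P.comap (fun p => ((p (Fin.last n)).1, (p (Fin.last n)).2.1)) (by fun_prop)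

variable {P : Kernel (S × A) S} {R : Kernel (S × A) ℝ} {π : Kernel S A} {μ : Measure S}

section SFinite

variable [IsSFiniteKernel P] [IsSFiniteKernel R] [IsSFiniteKernel π] [SFinite μ]

instance (t : ℕ) : IsSFiniteKernel (stateGivenPast P μ t) := by
  cases t <;> unfold stateGivenPast <;> infer_instance

lemma bind_bind_map_eq_compProd (ν : Measure S) [SFinite ν] :
    (ν.bind fun s => (π s).bind fun a => (R (s, a)).map fun r => (s, a, r)) = ν ⊗ₘ (π ⊗ₖ R) := by
  rw [← Measure.map_id (μ := ν ⊗ₘ (π ⊗ₖ R)), map_compProd_eq_bind _ _ measurable_id]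
  congr with s : 1
  rw [Kernel.compProd_apply_eq_compProd_sectR, map_compProd_eq_bind _ _ (by fun_prop)]
  rfl

lemma initLaw_eq_compProd : initLaw R π μ = μ ⊗ₘ (π ⊗ₖ R) :=
  bind_bind_map_eq_compProd μ

lemma stepLaw_eq_compProd (x : S × A × ℝ) :
    stepLaw P R π x = P (x.1, x.2.1) ⊗ₘ (π ⊗ₖ R) :=
  bind_bind_map_eq_compProd _

lemma compProd_prodMkLeft_stateGivenPast_zero_apply (p : Fin 0 → S × A × ℝ) :
    (stateGivenPast P μ 0 ⊗ₖ (π ⊗ₖ R).prodMkLeft _) p = initLaw R π μ := by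
  rw [Kernel.compProd_apply_eq_compProd_sectR, initLaw_eq_compProd]
  rfl

lemma compProd_prodMkLeft_stateGivenPast_succ_apply (n : ℕ) (p : Fin (n + 1) → S × A × ℝ) :
    (stateGivenPast P μ (n + 1) ⊗ₖ (π ⊗ₖ R).prodMkLeft _) p =
      stepLaw P R π (p (Fin.last n)) := by
  rw [Kernel.compProd_apply_eq_compProd_sectR, stepLaw_eq_compProd]
  rfl

lemma measurable_fin_snoc {X : Type*} [MeasurableSpace X] (n : ℕ) :
    Measurable fun p : (Fin n → X) × X => (Fin.snoc p.1 p.2 : Fin (n + 1) → X) := by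
  refine measurable_pi_iff.2 fun i => ?_
  induction i using Fin.lastCases with
  | last => simpa using measurable_snd
  | cast i => simp only [Fin.snoc_castSucc]; fun_prop

lemma finLaw_zero_eq_map_compProd (p : Fin 0 → S × A × ℝ) :
    finLaw P R π μ 0 = (Measure.dirac p ⊗ₘ
      (stateGivenPast P μ 0 ⊗ₖ (π ⊗ₖ R).prodMkLeft _)).map fun p => Fin.snoc p.1 p.2 := by
  rw [map_compProd_eq_bind _ _ (measurable_fin_snoc _)]
  simp only [compProd_prodMkLeft_stateGivenPast_zero_apply, Subsingleton.elim _ p]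
  rw [Measure.dirac_bind measurable_const, finLaw]
  congr with x i : 2

lemma finLaw_succ_eq_map_compProd (n : ℕ) [SFinite (finLaw P R π μ n)] :
    finLaw P R π μ (n + 1) = (finLaw P R π μ n ⊗ₘ
      (stateGivenPast P μ (n + 1) ⊗ₖ (π ⊗ₖ R).prodMkLeft _)).map fun p => Fin.snoc p.1 p.2 := by
  rw [map_compProd_eq_bind _ _ (measurable_fin_snoc _)]
  simp only [compProd_prodMkLeft_stateGivenPast_succ_apply]
  rfl

variable {Pb : Measure (ℕ → S × A × ℝ)} [IsProbabilityMeasure Pb]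

lemma finLaw_eq_map_compProd (hPb : ∀ n, Pb.map (past (n + 1)) = finLaw P R π μ n) (t : ℕ) :
    finLaw P R π μ t = (Pb.map (past t) ⊗ₘ
      (stateGivenPast P μ t ⊗ₖ (π ⊗ₖ R).prodMkLeft _)).map fun p => Fin.snoc p.1 p.2 := by
  cases t with
  | zero =>
    have h_past : (past 0 : (ℕ → S × A × ℝ) → _) = fun _ => Fin.elim0 := Subsingleton.elim _ _
    rw [h_past, Measure.map_const, measure_univ, one_smul, ← finLaw_zero_eq_map_compProd]
  | succ n =>
    have : SFinite (finLaw P R π μ n) := hPb n ▸ inferInstance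
    rw [hPb, ← finLaw_succ_eq_map_compProd]

theorem hasCondDistrib_observation_past
    (hPb : ∀ n, Pb.map (past (n + 1)) = finLaw P R π μ n) (t : ℕ) :
    HasCondDistrib (fun ω => ω t) (past t)
      (stateGivenPast P μ t ⊗ₖ (π ⊗ₖ R).prodMkLeft _) Pb := by
  refine ⟨by fun_prop, ?_⟩
  have h_split : Measurable fun p : Fin (t + 1) → S × A × ℝ => (Fin.init p, p (Fin.last t)) := by
    unfold Fin.init; fun_prop
  calc Pb.map (fun ω => (past t ω, ω t))
      = (Pb.map (past (t + 1))).map fun p => (Fin.init p, p (Fin.last t)) := by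
        rw [Measure.map_map h_split (by fun_prop)]
        rfl
    _ = Pb.map (past t) ⊗ₘ (stateGivenPast P μ t ⊗ₖ (π ⊗ₖ R).prodMkLeft _) := by
        rw [hPb, finLaw_eq_map_compProd hPb, Measure.map_map h_split (measurable_fin_snoc _)]
        convert Measure.map_id using 2
        ext p : 1
        simp

end SFinite

section Markov

variable [IsSFiniteKernel P] [IsMarkovKernel R] [IsMarkovKernel π] [SFinite μ]
  {Pb : Measure (ℕ → S × A × ℝ)} [IsProbabilityMeasure Pb]

theorem hasCondDistrib_state_past
    (hPb : ∀ n, Pb.map (past (n + 1)) = finLaw P R π μ n) (t : ℕ) :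
    HasCondDistrib (fun ω => (ω t).1) (past t) (stateGivenPast P μ t) Pb := by
  simpa only [Kernel.fst_compProd] using (hasCondDistrib_observation_past hPb t).fst

theorem hasCondDistrib_reward_past_state_action
    (hPb : ∀ n, Pb.map (past (n + 1)) = finLaw P R π μ n) (t : ℕ) :
    HasCondDistrib (fun ω => (ω t).2.2) (fun ω => ((past t ω, (ω t).1), (ω t).2.1))
      (R.comap (fun x => (x.1.2, x.2)) (by fun_prop)) Pb := by
  have h := (hasCondDistrib_observation_past hPb t).of_compProd
  rw [prodMkLeft_compProd] at h
  exact h.of_compProd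

end Markov

/-- The σ-algebra of the martingale structure: everything observed strictly before time `t`,
together with the state `s_t`, but neither the action `a_t` nor the reward `r_t`. -/
abbrev stateHistory (t : ℕ) : MeasurableSpace (ℕ → S × A × ℝ) :=
  MeasurableSpace.comap (fun ω => (past t ω, (ω t).1)) inferInstance

lemma stateHistory_le_comap_past_succ (t : ℕ) :
    stateHistory t ≤ MeasurableSpace.comap (past (X := S × A × ℝ) (t + 1)) inferInstance := by
  have h : Measurable fun p : Fin (t + 1) → S × A × ℝ => (Fin.init p, (p (Fin.last t)).1) := by
    unfold Fin.init; fun_prop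
  exact (h.comp (comap_measurable (past (t + 1)))).comap_le

lemma stateHistory_le_comap_past_state_action (t : ℕ) :
    stateHistory t ≤ MeasurableSpace.comap
      (fun ω : ℕ → S × A × ℝ => ((past t ω, (ω t).1), (ω t).2.1)) inferInstance :=
  ((comap_measurable fun ω : ℕ → S × A × ℝ => ((past t ω, (ω t).1), (ω t).2.1)).fst).comap_le

lemma measurable_Xt_stateHistory {s t : ℕ} (hst : s < t) :
    Measurable[stateHistory t] (Xt s : (ℕ → S × A × ℝ) → S × A × ℝ × S) := by
  have h : Measurable[stateHistory t] fun ω : ℕ → S × A × ℝ => (past t ω, (ω t).1) :=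
    comap_measurable _
  have h_past (i : Fin t) : Measurable[stateHistory t] fun ω : ℕ → S × A × ℝ => ω i :=
    (measurable_pi_apply i).comp h.fst
  have h_next : Measurable[stateHistory t] fun ω : ℕ → S × A × ℝ => (ω (s + 1)).1 := by
    rcases (Nat.succ_le_of_lt hst).eq_or_lt with rfl | hst'
    · exact h.snd
    · exact (h_past ⟨s + 1, hst'⟩).fst
  have h_obs := h_past ⟨s, hst⟩
  exact h_obs.fst.prodMk (h_obs.snd.fst.prodMk (h_obs.snd.snd.prodMk h_next))

/-- The temporal-difference error `r + γ v(s') − q(s,a)` weighted by `u(s,a)`; the efficient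
estimating function is the case `u(s,a) = w(s) η(s,a)`. -/
def weightedTDError (γ : ℝ) (u : S → A → ℝ) (v : S → ℝ) (q : S → A → ℝ)
    (x : S × A × ℝ × S) : ℝ :=
  u x.1 x.2.1 * (x.2.2.1 + γ * v x.2.2.2 - q x.1 x.2.1)

lemma measurable_weightedTDError {γ : ℝ} {u : S → A → ℝ} {v : S → ℝ} {q : S → A → ℝ}
    (hu : Measurable (Function.uncurry u)) (hv : Measurable v)
    (hq : Measurable (Function.uncurry q)) : Measurable (weightedTDError γ u v q) := by
  unfold weightedTDError
  fun_prop

section Orthogonality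

variable {γ : ℝ} {u q : S → A → ℝ} {v : S → ℝ} {Z : (ℕ → S × A × ℝ) → ℝ} {t : ℕ}
  {CR Cv : NNReal} {Cu : ℝ} {Pb : Measure (ℕ → S × A × ℝ)}

lemma mul_weightedTDError_eq_add
    (hq : ∀ s a, q s a = (∫ r, r ∂(R (s, a))) + γ * ∫ s', v s' ∂(P (s, a))) (z : ℝ)
    (x : S × A × ℝ × S) :
    z * weightedTDError γ u v q x =
      z * u x.1 x.2.1 * (x.2.2.1 - ∫ r, r ∂(R (x.1, x.2.1))) +
        γ * (z * u x.1 x.2.1 * (v x.2.2.2 - ∫ s', v s' ∂(P (x.1, x.2.1)))) := by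
  rw [weightedTDError, hq]
  ring

lemma integrable_mul_weight (hu : Measurable (Function.uncurry u)) (hCu : ∀ s a, |u s a| ≤ Cu)
    (hZ_int : Integrable Z Pb) : Integrable (fun ω => Z ω * u (ω t).1 (ω t).2.1) Pb :=
  have h : Measurable fun ω : ℕ → S × A × ℝ => u (ω t).1 (ω t).2.1 := by fun_prop
  hZ_int.mul_bdd h.aestronglyMeasurable (ae_of_all _ fun _ => hCu _ _)

lemma measurable_mul_weight_comap_past_succ (hu : Measurable (Function.uncurry u))
    (hZ : Measurable[stateHistory t] Z) :
    Measurable[.comap (past (t + 1)) inferInstance] fun ω => Z ω * u (ω t).1 (ω t).2.1 := by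
  have h : Measurable[.comap (past (t + 1)) inferInstance] fun ω : ℕ → S × A × ℝ => ω t :=
    (measurable_pi_apply (Fin.last t)).comp (comap_measurable (past (t + 1)))
  exact (hZ.mono (stateHistory_le_comap_past_succ t) le_rfl).mul
    (hu.comp (h.fst.prodMk h.snd.fst))

lemma measurable_mul_weight_comap_past_state_action (hu : Measurable (Function.uncurry u))
    (hZ : Measurable[stateHistory t] Z) :
    Measurable[.comap (fun ω : ℕ → S × A × ℝ => ((past t ω, (ω t).1), (ω t).2.1)) inferInstance]
      fun ω => Z ω * u (ω t).1 (ω t).2.1 := by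
  have h : Measurable[.comap (fun ω : ℕ → S × A × ℝ => ((past t ω, (ω t).1), (ω t).2.1))
      inferInstance] fun ω : ℕ → S × A × ℝ => ((past t ω, (ω t).1), (ω t).2.1) :=
    comap_measurable _
  exact (hZ.mono (stateHistory_le_comap_past_state_action t) le_rfl).mul
    (hu.comp (h.fst.snd.prodMk h.snd))

variable [IsSFiniteKernel P] [IsMarkovKernel R] [IsMarkovKernel π] [SFinite μ]
  [IsProbabilityMeasure Pb]

lemma isCentered_mul_reward_sub (hPb : ∀ n, Pb.map (past (n + 1)) = finLaw P R π μ n)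
    (hR : ∀ p, ∫⁻ r, ‖r‖ₑ ∂(R p) ≤ CR) (hu : Measurable (Function.uncurry u))
    (hCu : ∀ s a, |u s a| ≤ Cu) (hZ : Measurable[stateHistory t] Z) (hZ_int : Integrable Z Pb) :
    IsCentered (fun ω => Z ω * u (ω t).1 (ω t).2.1 *
      ((ω t).2.2 - ∫ r, r ∂(R ((ω t).1, (ω t).2.1)))) Pb := by
  have h := isCentered_mul_sub_of_hasCondDistrib (hasCondDistrib_reward_past_state_action hPb t)
    (measurable_mul_weight_comap_past_state_action hu hZ) (integrable_mul_weight hu hCu hZ_int)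
    measurable_id fun _ => hR _
  exact h

lemma isCentered_mul_state_sub (hPb : ∀ n, Pb.map (past (n + 1)) = finLaw P R π μ n)
    (hu : Measurable (Function.uncurry u)) (hCu : ∀ s a, |u s a| ≤ Cu) (hv : Measurable v)
    (hCv : ∀ p, ∫⁻ s, ‖v s‖ₑ ∂(P p) ≤ Cv) (hZ : Measurable[stateHistory t] Z)
    (hZ_int : Integrable Z Pb) :
    IsCentered (fun ω => Z ω * u (ω t).1 (ω t).2.1 *
      (v (ω (t + 1)).1 - ∫ s', v s' ∂(P ((ω t).1, (ω t).2.1)))) Pb := by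
  have h := isCentered_mul_sub_of_hasCondDistrib (hasCondDistrib_state_past hPb (t + 1))
    (measurable_mul_weight_comap_past_succ hu hZ) (integrable_mul_weight hu hCu hZ_int)
    hv fun _ => hCv _
  exact h

theorem isCentered_mul_weightedTDError_Xt (hPb : ∀ n, Pb.map (past (n + 1)) = finLaw P R π μ n)
    (hR : ∀ p, ∫⁻ r, ‖r‖ₑ ∂(R p) ≤ CR) (hu : Measurable (Function.uncurry u))
    (hCu : ∀ s a, |u s a| ≤ Cu) (hv : Measurable v) (hCv : ∀ p, ∫⁻ s, ‖v s‖ₑ ∂(P p) ≤ Cv)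
    (hq : ∀ s a, q s a = (∫ r, r ∂(R (s, a))) + γ * ∫ s', v s' ∂(P (s, a)))
    (hZ : Measurable[stateHistory t] Z) (hZ_int : Integrable Z Pb) :
    IsCentered (fun ω => Z ω * weightedTDError γ u v q (Xt t ω)) Pb := by
  simp only [mul_weightedTDError_eq_add hq]
  exact (isCentered_mul_reward_sub hPb hR hu hCu hZ hZ_int).add
    ((isCentered_mul_state_sub hPb hu hCu hv hCv hZ hZ_int).const_mul γ)

end Orthogonality

end Trajectory

lemma measurable_of_bellman {P : Kernel (S × A) S} {R : Kernel (S × A) ℝ} {γ : ℝ} {v : S → ℝ}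
    {q : S → A → ℝ} (hv : Measurable v)
    (hq : ∀ s a, q s a = (∫ r, r ∂(R (s, a))) + γ * ∫ s', v s' ∂(P (s, a))) :
    Measurable (Function.uncurry q) := by
  have h_reward : Measurable fun p : S × A => ∫ r, r ∂(R p) :=
    stronglyMeasurable_id.integral_kernel.measurable
  have h_value : Measurable fun p : S × A => ∫ s', v s' ∂(P p) :=
    hv.stronglyMeasurable.integral_kernel.measurable
  have h_eq : Function.uncurry q = fun p => (∫ r, r ∂(R p)) + γ * ∫ s', v s' ∂(P p) :=
    funext fun p => hq p.1 p.2
  rw [h_eq]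
  fun_prop

lemma measurable_integral_policy {π : Kernel S A} [IsSFiniteKernel π] {q : S → A → ℝ}
    (hq : Measurable (Function.uncurry q)) : Measurable fun s => ∫ a, q s a ∂(π s) :=
  hq.stronglyMeasurable.integral_kernel_prod_right.measurable

lemma lintegral_enorm_integral_policy_le {ν : Measure S} [IsProbabilityMeasure ν]
    {π : Kernel S A} [IsMarkovKernel π] {q : S → A → ℝ} {C : ℝ} (hq : ∀ s a, |q s a| ≤ C) :
    ∫⁻ s, ‖∫ a, q s a ∂(π s)‖ₑ ∂ν ≤ C.toNNReal :=
  lintegral_enorm_le_of_norm_le <| ae_of_all _ fun s => by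
    simpa using norm_integral_le_of_norm_le_const (μ := π s) (f := q s) (ae_of_all _ (hq s))

lemma lintegral_enorm_le_of_measure_Icc_compl_eq_zero {ν : Measure ℝ} [IsProbabilityMeasure ν]
    {B : ℝ} (hν : ν (Set.Icc 0 B)ᶜ = 0) : ∫⁻ r, ‖r‖ₑ ∂ν ≤ B.toNNReal :=
  have h_mem : ∀ᵐ r ∂ν, r ∈ Set.Icc 0 B := hν
  lintegral_enorm_le_of_norm_le <| h_mem.mono fun _ hr => (Real.norm_of_nonneg hr.1).trans_le hr.2

lemma abs_mul_le_of_nonneg_of_le {x y C D : ℝ} (hx : 0 ≤ x ∧ x ≤ C) (hy : 0 ≤ y ∧ y ≤ D) :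
    |x * y| ≤ C * D := by
  rw [abs_of_nonneg (mul_nonneg hx.1 hy.1)]
  exact mul_le_mul hx.2 hy.2 hy.1 (hx.1.trans hx.2)

theorem efficient_influence_martingale_structure_general
    {P : Kernel (S × A) S} [IsSFiniteKernel P] {R : Kernel (S × A) ℝ} [IsMarkovKernel R]
    {CR : NNReal} (hR : ∀ p, ∫⁻ r, ‖r‖ₑ ∂(R p) ≤ CR)
    {πb : Kernel S A} [IsMarkovKernel πb] {μb : Measure S} [SFinite μb]
    {u : S → A → ℝ} (hu : Measurable (Function.uncurry u))
    {Cu : ℝ} (hCu : ∀ s a, |u s a| ≤ Cu)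
    {v : S → ℝ} (hv : Measurable v)
    {Cv : NNReal} (hCv : ∀ p, ∫⁻ s, ‖v s‖ₑ ∂(P p) ≤ Cv)
    {γ : ℝ} {q : S → A → ℝ}
    (hq : ∀ s a, q s a = (∫ r, r ∂(R (s, a))) + γ * ∫ s', v s' ∂(P (s, a)))
    {Pb : Measure (ℕ → S × A × ℝ)} [IsProbabilityMeasure Pb]
    (hPb : ∀ n, Pb.map (past (n + 1)) = finLaw P R πb μb n) :
    (∀ t, IsCentered (fun ω => weightedTDError γ u v q (Xt t ω)) Pb) ∧
      ∀ s t, s < t → IsCentered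
        (fun ω => weightedTDError γ u v q (Xt s ω) * weightedTDError γ u v q (Xt t ω)) Pb := by
  have h_orth {t : ℕ} {Z : (ℕ → S × A × ℝ) → ℝ} (hZ : Measurable[stateHistory t] Z)
      (hZ_int : Integrable Z Pb) :
      IsCentered (fun ω => Z ω * weightedTDError γ u v q (Xt t ω)) Pb :=
    isCentered_mul_weightedTDError_Xt hPb hR hu hCu hv hCv hq hZ hZ_int
  have h_mean (t : ℕ) : IsCentered (fun ω => weightedTDError γ u v q (Xt t ω)) Pb := by
    simpa only [one_mul] using h_orth measurable_const (integrable_const (1 : ℝ))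
  have h_meas : Measurable (weightedTDError γ u v q) :=
    measurable_weightedTDError hu hv (measurable_of_bellman hv hq)
  exact ⟨h_mean, fun s t hst =>
    h_orth (h_meas.comp (measurable_Xt_stateHistory hst)) (h_mean s).integrable⟩

/-- martingale structure of the efficient estimating function along
trajectories: under the trajectory law `P_b`, the efficient estimating function
`φ(s,a,r,s') = w(s) η(s,a) (r + γ v(s') − q(s,a))` has mean zero at every time `t`, and
is uncorrelated across time. -/
theorem efficient_influence_martingale_structure
    (P : Kernel (S × A) S) [IsMarkovKernel P]
    (Rmax : ℝ) (hRmax : 0 < Rmax)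
    (R : Kernel (S × A) ℝ) [IsMarkovKernel R]
    (hR : ∀ p : S × A, R p (Set.Icc (0 : ℝ) Rmax)ᶜ = 0)
    (γ : ℝ) (hγ0 : 0 < γ) (hγ1 : γ < 1)
    (πe πb : Kernel S A) [IsMarkovKernel πe] [IsMarkovKernel πb]
    (μe μb : Measure S) [IsProbabilityMeasure μe] [IsProbabilityMeasure μb]
    -- the policy density ratio η, bounded
    (η : S → A → ℝ) (hη_meas : Measurable (Function.uncurry η))
    (hη_bdd : ∃ C : ℝ, ∀ s a, 0 ≤ η s a ∧ η s a ≤ C)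
    (hη : ∀ᵐ s ∂μb, πe s = (πb s).withDensity fun a => ENNReal.ofReal (η s a))
    -- the stationary density ratio w, a bounded measurable density of d_γ wrt μ_b
    (w : S → ℝ) (hw_meas : Measurable w)
    (hw_bdd : ∃ C : ℝ, ∀ s, 0 ≤ w s ∧ w s ≤ C)
    (hw : dgamma γ μe (stateKernel P πe) =
      μb.withDensity fun s => ENNReal.ofReal (w s))
    -- the q-function: bounded, measurable and satisfying the Bellman evaluation equation
    (q : S → A → ℝ) (hq_meas : Measurable (Function.uncurry q))
    (hq_bdd : ∃ C : ℝ, ∀ s a, |q s a| ≤ C)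
    (hq_bellman : ∀ s a, q s a =
      (∫ r, r ∂(R (s, a))) + γ * ∫ s', (∫ a', q s' a' ∂(πe s')) ∂(P (s, a)))
    -- the efficient estimating function φ
    (φ : S × A × ℝ × S → ℝ)
    (hφ : ∀ x : S × A × ℝ × S, φ x =
      w x.1 * η x.1 x.2.1 *
        (x.2.2.1 + γ * (∫ a, q x.2.2.2 a ∂(πe x.2.2.2)) - q x.1 x.2.1))
    -- the trajectory law P_b, characterized by its finite-dimensional prefixes
    (Pb : Measure (ℕ → S × A × ℝ)) [IsProbabilityMeasure Pb]
    (hPb : ∀ n : ℕ, Pb.map (fun ω => fun i : Fin (n + 1) => ω i) = finLaw P R πb μb n) :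
    (∀ t : ℕ, ∫ ω, φ (Xt t ω) ∂Pb = 0) ∧
      (∀ t : ℕ, 1 ≤ t → ∫ ω, φ (Xt 0 ω) * φ (Xt t ω) ∂Pb = 0) := by
  obtain ⟨Cη, hCη⟩ := hη_bdd
  obtain ⟨Cw, hCw⟩ := hw_bdd
  obtain ⟨Cq, hCq⟩ := hq_bdd
  obtain rfl : φ = weightedTDError γ (fun s a => w s * η s a) (fun s => ∫ a, q s a ∂(πe s)) q :=
    funext hφ
  obtain ⟨h_mean, h_orth⟩ := efficient_influence_martingale_structure_general
    (fun p => lintegral_enorm_le_of_measure_Icc_compl_eq_zero (hR p)) (by fun_prop)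
    (fun s a => abs_mul_le_of_nonneg_of_le (hCw s) (hCη s a)) (measurable_integral_policy hq_meas)
    (fun _ => lintegral_enorm_integral_policy_le hCq) hq_bellman hPb
  exact ⟨fun t => (h_mean t).integral_eq_zero, fun t ht => (h_orth 0 t ht).integral_eq_zero⟩

end
end

section
/- (Weighted Cauchy–Schwarz bound underlying Lemma 2, which states that the asymptotic variance of the direct method under a well-specified parametric q-model is at most the MDP efficiency bound EB(M_3).) Let (Ω, P) be a probability space, d a positive integer, W : Ω → ℝ, V : Ω → ℝ, and X : Ω → ℝ^d measurable, with V > 0 almost surely. Assume W²·V, ‖X‖²/V, and W·X are integrable. Let u = E[W X] ∈ ℝ^d and let M be the d × d matrix E[X Xᵀ / V]; assume M is positive definite. Then uᵀ M⁻¹ u ≤ E[W² V]. -/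
open MeasureTheory Matrix

noncomputable section

/-!
In `L²(μ)` put `x = W √V` and `vᵢ = Xᵢ / √V`. Then `E[W² V] = ‖x‖²`, the matrix `M` is the Gram
matrix of the `vᵢ`, and `uᵢ = ⟪vᵢ, x⟫`. If `M a = u`, then `y = ∑ aᵢ vᵢ` is the orthogonal
projection of `x` onto the span of the `vᵢ`, so `uᵀ a = ‖y‖² ≤ ‖x‖²`.
-/

section Gram

variable {𝕜 E ι : Type*} [RCLike 𝕜] [SeminormedAddCommGroup E] [InnerProductSpace 𝕜 E] [Fintype ι]

theorem star_dotProduct_inner (v : ι → E) (x : E) (a : ι → 𝕜) :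
    star a ⬝ᵥ (fun i ↦ inner 𝕜 (v i) x) = inner 𝕜 (∑ i, a i • v i) x := by
  simp only [dotProduct, Pi.star_apply, RCLike.star_def, sum_inner, inner_smul_left]

theorem re_star_dotProduct_le_sq_norm_of_gram_mulVec_eq {v : ι → E} {x : E} {a : ι → 𝕜}
    (h : gram 𝕜 v *ᵥ a = fun i ↦ inner 𝕜 (v i) x) :
    RCLike.re (star a ⬝ᵥ fun i ↦ inner 𝕜 (v i) x) ≤ ‖x‖ ^ 2 := by
  set y := ∑ i, a i • v i
  have inner_self_eq : inner 𝕜 y y = inner 𝕜 y x := by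
    rw [← star_dotProduct_gram_mulVec, h, star_dotProduct_inner]
  have sq_norm_eq : ‖y‖ ^ 2 = RCLike.re (inner 𝕜 y x) := by
    rw [← inner_self_eq, inner_self_eq_norm_sq]
  have sq_norm_le : ‖y‖ ^ 2 ≤ ‖y‖ * ‖x‖ := sq_norm_eq.trans_le (re_inner_le_norm y x)
  rw [star_dotProduct_inner, ← sq_norm_eq]
  nlinarith [sq_nonneg (‖x‖ - ‖y‖)]

end Gram

section L2

variable {Ω : Type*} [MeasurableSpace Ω] {μ : Measure Ω}

theorem inner_toLp_toLp {𝕜 E : Type*} [RCLike 𝕜] [NormedAddCommGroup E] [InnerProductSpace 𝕜 E]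
    {f g : Ω → E} (hf : MemLp f 2 μ) (hg : MemLp g 2 μ) :
    inner 𝕜 (hf.toLp f) (hg.toLp g) = ∫ ω, inner 𝕜 (f ω) (g ω) ∂μ := by
  rw [L2.inner_def]
  refine integral_congr_ae ?_
  filter_upwards [hf.coeFn_toLp, hg.coeFn_toLp] with ω hfω hgω
  rw [hfω, hgω]

theorem memLp_two_mul_sqrt {f V : Ω → ℝ} (hf : AEMeasurable f μ) (hV : AEMeasurable V μ)
    (hV_nonneg : ∀ᵐ ω ∂μ, 0 ≤ V ω) (hint : Integrable (fun ω ↦ f ω ^ 2 * V ω) μ) :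
    MemLp (fun ω ↦ f ω * √(V ω)) 2 μ := by
  refine (memLp_two_iff_integrable_sq (hf.mul hV.sqrt).aestronglyMeasurable).mpr (hint.congr ?_)
  filter_upwards [hV_nonneg] with ω hω
  simp only [Pi.mul_apply, mul_pow, Real.sq_sqrt hω]

theorem memLp_two_div_sqrt {f V : Ω → ℝ} (hf : AEMeasurable f μ) (hV : AEMeasurable V μ)
    (hV_nonneg : ∀ᵐ ω ∂μ, 0 ≤ V ω) (hint : Integrable (fun ω ↦ f ω ^ 2 / V ω) μ) :
    MemLp (fun ω ↦ f ω / √(V ω)) 2 μ := by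
  simpa only [Real.sqrt_inv, ← div_eq_mul_inv] using
    memLp_two_mul_sqrt (V := fun ω ↦ (V ω)⁻¹) hf hV.inv
      (hV_nonneg.mono fun _ ↦ inv_nonneg.mpr) hint

theorem integrable_of_integrable_sum_of_nonneg {ι : Type*} {s : Finset ι} {f : ι → Ω → ℝ}
    (hf : ∀ i ∈ s, AEStronglyMeasurable (f i) μ) (hf_nonneg : ∀ᵐ ω ∂μ, ∀ i ∈ s, 0 ≤ f i ω)
    (hint : Integrable (fun ω ↦ ∑ i ∈ s, f i ω) μ) {i : ι} (hi : i ∈ s) :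
    Integrable (f i) μ := by
  refine hint.mono' (hf i hi) ?_
  filter_upwards [hf_nonneg] with ω hω
  rw [Real.norm_of_nonneg (hω i hi)]
  exact Finset.single_le_sum hω hi

theorem mul_sqrt_mul_div_sqrt {V : ℝ} (hV : 0 < V) (x y : ℝ) : x * √V * (y / √V) = x * y := by
  rw [mul_assoc, mul_div_cancel₀ _ (Real.sqrt_pos.mpr hV).ne']

theorem integrable_mul_of_memLp_mul_sqrt_of_memLp_div_sqrt {f g V : Ω → ℝ}
    (hV_pos : ∀ᵐ ω ∂μ, 0 < V ω) (hf : MemLp (fun ω ↦ f ω * √(V ω)) 2 μ)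
    (hg : MemLp (fun ω ↦ g ω / √(V ω)) 2 μ) :
    Integrable (fun ω ↦ f ω * g ω) μ :=
  (hf.integrable_mul hg).congr (hV_pos.mono fun _ hω ↦ mul_sqrt_mul_div_sqrt hω _ _)

theorem sq_norm_toLp_mul_sqrt {f V : Ω → ℝ} (hV_nonneg : ∀ᵐ ω ∂μ, 0 ≤ V ω)
    (hf : MemLp (fun ω ↦ f ω * √(V ω)) 2 μ) :
    ‖hf.toLp‖ ^ 2 = ∫ ω, f ω ^ 2 * V ω ∂μ := by
  rw [← real_inner_self_eq_norm_sq, inner_toLp_toLp]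
  refine integral_congr_ae (hV_nonneg.mono fun ω hω ↦ ?_)
  simp only [Real.inner_apply, ← sq, mul_pow, Real.sq_sqrt hω]

theorem inner_toLp_div_sqrt {f g V : Ω → ℝ} (hV_nonneg : ∀ᵐ ω ∂μ, 0 ≤ V ω)
    (hf : MemLp (fun ω ↦ f ω / √(V ω)) 2 μ) (hg : MemLp (fun ω ↦ g ω / √(V ω)) 2 μ) :
    inner ℝ hf.toLp hg.toLp = ∫ ω, f ω * g ω / V ω ∂μ := by
  rw [inner_toLp_toLp]
  refine integral_congr_ae (hV_nonneg.mono fun ω hω ↦ ?_)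
  simp only [Real.inner_apply, div_mul_div_comm, Real.mul_self_sqrt hω]

theorem inner_toLp_div_sqrt_toLp_mul_sqrt {f g V : Ω → ℝ} (hV_pos : ∀ᵐ ω ∂μ, 0 < V ω)
    (hf : MemLp (fun ω ↦ f ω * √(V ω)) 2 μ) (hg : MemLp (fun ω ↦ g ω / √(V ω)) 2 μ) :
    inner ℝ hg.toLp hf.toLp = ∫ ω, f ω * g ω ∂μ := by
  rw [real_inner_comm, inner_toLp_toLp]
  refine integral_congr_ae (hV_pos.mono fun ω hω ↦ ?_)
  simp only [Real.inner_apply, mul_sqrt_mul_div_sqrt hω]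

end L2

theorem weighted_cauchy_schwarz_bound_general
    {Ω ι : Type*} [MeasurableSpace Ω] [Fintype ι] {μ : Measure Ω} {W V : Ω → ℝ} {X : Ω → ι → ℝ}
    (hW : AEMeasurable W μ) (hV : AEMeasurable V μ) (hX : AEMeasurable X μ)
    (hV_pos : ∀ᵐ ω ∂μ, 0 < V ω)
    (hWV : Integrable (fun ω ↦ W ω ^ 2 * V ω) μ)
    (hXV : Integrable (fun ω ↦ (∑ i, X ω i ^ 2) / V ω) μ)
    {M : Matrix ι ι ℝ} (hM : M = Matrix.of fun i j ↦ ∫ ω, X ω i * X ω j / V ω ∂μ)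
    {a : ι → ℝ} (ha : M *ᵥ a = ∫ ω, W ω • X ω ∂μ) :
    (∫ ω, W ω • X ω ∂μ) ⬝ᵥ a ≤ ∫ ω, W ω ^ 2 * V ω ∂μ := by
  have hV_nonneg : ∀ᵐ ω ∂μ, 0 ≤ V ω := hV_pos.mono fun _ ↦ le_of_lt
  have hXi (i : ι) : AEMeasurable (fun ω ↦ X ω i) μ := aemeasurable_pi_iff.mp hX i
  have hXiV (i : ι) : Integrable (fun ω ↦ X ω i ^ 2 / V ω) μ := by
    simp only [Finset.sum_div] at hXV
    refine integrable_of_integrable_sum_of_nonneg (f := fun i ω ↦ X ω i ^ 2 / V ω)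
      (fun i _ ↦ (((hXi i).pow_const 2).div hV).aestronglyMeasurable) ?_ hXV (Finset.mem_univ i)
    exact hV_nonneg.mono fun ω hω i _ ↦ div_nonneg (sq_nonneg _) hω
  have hx : MemLp (fun ω ↦ W ω * √(V ω)) 2 μ := memLp_two_mul_sqrt hW hV hV_nonneg hWV
  have hv (i : ι) : MemLp (fun ω ↦ X ω i / √(V ω)) 2 μ :=
    memLp_two_div_sqrt (hXi i) hV hV_nonneg (hXiV i)
  have gram_eq : gram ℝ (fun i ↦ (hv i).toLp) = M := by
    ext i j
    rw [hM, of_apply, gram_apply, inner_toLp_div_sqrt hV_nonneg]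
  have inner_eq : (fun i ↦ inner ℝ (hv i).toLp hx.toLp) = ∫ ω, W ω • X ω ∂μ := by
    ext i
    rw [inner_toLp_div_sqrt_toLp_mul_sqrt hV_pos]
    exact (eval_integral (f := fun ω ↦ W ω • X ω)
      (fun i ↦ integrable_mul_of_memLp_mul_sqrt_of_memLp_div_sqrt hV_pos hx (hv i)) i).symm
  calc (∫ ω, W ω • X ω ∂μ) ⬝ᵥ a
      = star a ⬝ᵥ fun i ↦ inner ℝ (hv i).toLp hx.toLp := by
        rw [inner_eq, star_trivial, dotProduct_comm]
    _ ≤ ‖hx.toLp‖ ^ 2 :=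
        re_star_dotProduct_le_sq_norm_of_gram_mulVec_eq (by rw [gram_eq, ha, inner_eq])
    _ = ∫ ω, W ω ^ 2 * V ω ∂μ := sq_norm_toLp_mul_sqrt hV_nonneg hx

/-- weighted Cauchy–Schwarz bound underlying Lemma 2: with
`u = E[W X]` and `M = E[X Xᵀ / V]` positive definite, `uᵀ M⁻¹ u ≤ E[W² V]`. -/
theorem weighted_cauchy_schwarz_bound
    {Ω : Type*} [MeasurableSpace Ω] (Pm : Measure Ω) [IsProbabilityMeasure Pm]
    (d : ℕ) (hd : 0 < d)
    (W V : Ω → ℝ) (X : Ω → Fin d → ℝ)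
    (hW : Measurable W) (hV : Measurable V) (hX : Measurable X)
    (hVpos : ∀ᵐ ω ∂Pm, 0 < V ω)
    (hint1 : Integrable (fun ω => W ω ^ 2 * V ω) Pm)
    (hint2 : Integrable (fun ω => (∑ i, X ω i ^ 2) / V ω) Pm)
    (hint3 : Integrable (fun ω => W ω • X ω) Pm)
    (M : Matrix (Fin d) (Fin d) ℝ)
    (hM : M = Matrix.of fun i j => ∫ ω, X ω i * X ω j / V ω ∂Pm)
    (hMpd : M.PosDef) :
    (∫ ω, W ω • X ω ∂Pm) ⬝ᵥ (M⁻¹ *ᵥ ∫ ω, W ω • X ω ∂Pm) ≤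
      ∫ ω, W ω ^ 2 * V ω ∂Pm := by
  have hMu : M *ᵥ (M⁻¹ *ᵥ ∫ ω, W ω • X ω ∂Pm) = ∫ ω, W ω • X ω ∂Pm := by
    rw [mulVec_mulVec, mul_nonsing_inv _ hMpd.det_pos.ne'.isUnit, one_mulVec]
  exact weighted_cauchy_schwarz_bound_general hW.aemeasurable hV.aemeasurable hX.aemeasurable hVpos
    hint1 hint2 hM hMu

end
end

section
/- (Matrix Cauchy–Schwarz / GMM efficiency bound underlying Theorem 17.) Let (Ω, P) be a probability space, F : Ω → ℝ^k, G : Ω → ℝ^d, and V : Ω → ℝ measurable with V > 0 almost surely; assume V·‖F‖², ‖G‖²/V, and ‖F‖·‖G‖ are integrable. If the d × d matrix N = E[G Gᵀ / V] is positive definite, then the k × k matrix E[V · F Fᵀ] − E[F Gᵀ] N⁻¹ E[G Fᵀ] is positive semidefinite. Consequently, if k = d and A = E[F Gᵀ] is invertible, then A⁻¹ E[V F Fᵀ] (A⁻¹)ᵀ − N⁻¹ is positive semidefinite (the GMM sandwich variance with instrument F is bounded below in the Loewner order by (E[G Gᵀ / V])⁻¹), with equality when F = G/V almost surely. -/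
open MeasureTheory Matrix

noncomputable section

/-! In `L²(P)` put `uᵢ = √V Fᵢ` and `wⱼ = Gⱼ / √V`. Then `E[V F Fᵀ]`, `E[F Gᵀ]` and
`E[G Gᵀ / V]` are the matrices of inner products `⟪uᵢ, uⱼ⟫`, `⟪uᵢ, wⱼ⟫` and `⟪wᵢ, wⱼ⟫`, and the
bound says that a Schur complement in the Gram matrix of the combined family `(u, w)` is positive
semidefinite. Conjugating it by the inverse of `E[F Gᵀ]` gives the sandwich form. The optimal
instrument `F = G / V` is the case `u = w`. -/

section CrossGram

open scoped ComplexOrder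

variable {𝕜 E m n : Type*} [RCLike 𝕜]

/-- The rectangular analogue of `Matrix.gram`: the matrix of inner products of two families of
vectors. It fills the off-diagonal blocks of the Gram matrix of the combined family. -/
def crossGram (𝕜 : Type*) [Inner 𝕜 E] (u : m → E) (w : n → E) : Matrix m n 𝕜 :=
  of fun i j => inner 𝕜 (u i) (w j)

section Seminormed

variable [SeminormedAddCommGroup E] [InnerProductSpace 𝕜 E]

theorem conjTranspose_crossGram (u : m → E) (w : n → E) :
    (crossGram 𝕜 u w)ᴴ = crossGram 𝕜 w u :=
  Matrix.ext fun _ _ => inner_conj_symm _ _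

theorem gram_sumElim (u : m → E) (w : n → E) :
    gram 𝕜 (Sum.elim u w) =
      fromBlocks (gram 𝕜 u) (crossGram 𝕜 u w) (crossGram 𝕜 w u) (gram 𝕜 w) := by
  ext (i | i) (j | j) <;> rfl

theorem crossGram_mulVec [Fintype n] (u : m → E) (w : n → E) (x : n → 𝕜) (i : m) :
    (crossGram 𝕜 u w *ᵥ x) i = inner 𝕜 (u i) (∑ j, x j • w j) := by
  simp [crossGram, mulVec, dotProduct, inner_sum, inner_smul_right, mul_comm]

theorem posSemidef_gram_sub_crossGram [Finite m] [Fintype n] [DecidableEq n]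
    (u : m → E) {w : n → E} (hw : (gram 𝕜 w).PosDef) :
    (gram 𝕜 u - crossGram 𝕜 u w * (gram 𝕜 w)⁻¹ * crossGram 𝕜 w u).PosSemidef := by
  have := Fintype.ofFinite m
  have := hw.isUnit.invertible
  rw [← conjTranspose_crossGram u w, ← PosDef.fromBlocks₂₂ _ _ hw, conjTranspose_crossGram,
    ← gram_sumElim]
  exact posSemidef_gram 𝕜 _

end Seminormed

theorem posDef_gram_of_injective_crossGram_mulVec [NormedAddCommGroup E] [InnerProductSpace 𝕜 E]
    [Fintype n] {u : m → E} {w : n → E} (h : Function.Injective (crossGram 𝕜 u w).mulVec) :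
    (gram 𝕜 w).PosDef := by
  refine posDef_gram_of_linearIndependent (Fintype.linearIndependent_iff.2 fun x hx => ?_)
  have hx_zero : x = 0 := h <| by ext i; simp [crossGram_mulVec, hx]
  simp [hx_zero]

end CrossGram

section Sandwich

variable {n R : Type*} [Fintype n] [DecidableEq n] [CommRing R] [StarRing R]

theorem posSemidef_inv_mul_mul_conjTranspose_inv_sub [PartialOrder R] {A B N : Matrix n n R}
    (hA : IsUnit A.det) (h : (B - A * N * Aᴴ).PosSemidef) : (A⁻¹ * B * A⁻¹ᴴ - N).PosSemidef := by
  have hA' : IsUnit Aᴴ.det := by simpa [det_conjTranspose] using hA.star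
  have hN : A⁻¹ * (A * N * Aᴴ) * A⁻¹ᴴ = N := by
    rw [conjTranspose_nonsing_inv, Matrix.mul_assoc A, nonsing_inv_mul_cancel_left A _ hA,
      mul_nonsing_inv_cancel_right _ _ hA']
  simpa only [Matrix.mul_sub, Matrix.sub_mul, hN] using h.mul_mul_conjTranspose_same A⁻¹

theorem inv_mul_mul_conjTranspose_inv_self {N : Matrix n n R} (hN : N.IsHermitian)
    (hdet : IsUnit N.det) : N⁻¹ * N * N⁻¹ᴴ = N⁻¹ := by
  rw [nonsing_inv_mul N hdet, Matrix.one_mul, hN.inv.eq]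

end Sandwich

section WeightedMoment

variable {Ω m n : Type*} [MeasurableSpace Ω] {μ : Measure Ω}
  {a b V w w' : Ω → ℝ} {X X' F : Ω → m → ℝ} {Y Y' G : Ω → n → ℝ}

/-- The matrix of weighted second moments `E[w X Yᵀ]`. The weights `V`, `1` and `V⁻¹` give
`E[V F Fᵀ]`, `E[F Gᵀ]` and `E[G Gᵀ / V]`. An entry whose integrand is not integrable is `0`. -/
def weightedMoment (μ : Measure Ω) (w : Ω → ℝ) (X : Ω → m → ℝ) (Y : Ω → n → ℝ) : Matrix m n ℝ :=
  of fun i j => ∫ ω, w ω * (X ω i * Y ω j) ∂μ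

theorem weightedMoment_one (X : Ω → m → ℝ) (Y : Ω → n → ℝ) :
    weightedMoment μ 1 X Y = of fun i j => ∫ ω, X ω i * Y ω j ∂μ := by
  simp [weightedMoment]

theorem weightedMoment_inv (w : Ω → ℝ) (X : Ω → m → ℝ) (Y : Ω → n → ℝ) :
    weightedMoment μ w⁻¹ X Y = of fun i j => ∫ ω, X ω i * Y ω j / w ω ∂μ := by
  simp [weightedMoment, inv_mul_eq_div]

theorem transpose_weightedMoment (w : Ω → ℝ) (X : Ω → m → ℝ) (Y : Ω → n → ℝ) :
    (weightedMoment μ w X Y)ᵀ = weightedMoment μ w Y X := by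
  ext i j
  simp only [weightedMoment, transpose_apply, of_apply, mul_comm (X _ j)]

theorem isHermitian_weightedMoment (w : Ω → ℝ) (X : Ω → m → ℝ) :
    (weightedMoment μ w X X).IsHermitian := by
  rw [IsHermitian, conjTranspose_eq_transpose_of_trivial, transpose_weightedMoment]

theorem weightedMoment_congr
    (h : ∀ᵐ ω ∂μ, ∀ i j, w ω * (X ω i * Y ω j) = w' ω * (X' ω i * Y' ω j)) :
    weightedMoment μ w X Y = weightedMoment μ w' X' Y' :=
  Matrix.ext fun i j => integral_congr_ae (h.mono fun _ hω => hω i j)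

theorem crossGram_toLp_mul (hX : ∀ i, MemLp (fun ω => a ω * X ω i) 2 μ)
    (hY : ∀ j, MemLp (fun ω => b ω * Y ω j) 2 μ) (hab : a * b =ᵐ[μ] w) :
    crossGram ℝ (fun i => (hX i).toLp) (fun j => (hY j).toLp) = weightedMoment μ w X Y := by
  ext i j
  refine integral_congr_ae ?_
  filter_upwards [(hX i).coeFn_toLp, (hY j).coeFn_toLp, hab] with ω hXω hYω habω
  rw [hXω, hYω, ← habω]
  simp only [RCLike.inner_apply, conj_trivial, Pi.mul_apply]
  ring

theorem memLp_two_mul_of_integrable [Fintype m] (ha : AEMeasurable a μ) (hX : AEMeasurable X μ)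
    (haw : a * a =ᵐ[μ] w) (hint : Integrable (fun ω => w ω * ∑ i, X ω i ^ 2) μ) (i : m) :
    MemLp (fun ω => a ω * X ω i) 2 μ := by
  have haX : AEStronglyMeasurable (fun ω => a ω * X ω i) μ :=
    (ha.mul (aemeasurable_pi_iff.1 hX i)).aestronglyMeasurable
  refine (memLp_two_iff_integrable_sq haX).2 (hint.mono' (haX.pow 2) ?_)
  filter_upwards [haw] with ω hω
  calc ‖(a ω * X ω i) ^ 2‖ = a ω * a ω * X ω i ^ 2 := by
        rw [Real.norm_of_nonneg (sq_nonneg _)]; ring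
    _ ≤ a ω * a ω * ∑ i, X ω i ^ 2 := by
        gcongr
        · exact mul_self_nonneg _
        · exact Finset.single_le_sum (f := fun i => X ω i ^ 2) (fun _ _ => sq_nonneg _)
            (Finset.mem_univ i)
    _ = w ω * ∑ i, X ω i ^ 2 := by rw [← hω, Pi.mul_apply]

theorem exists_crossGram_eq_weightedMoment [Fintype m] [Fintype n]
    (hV : AEMeasurable V μ) (hF : AEMeasurable F μ) (hG : AEMeasurable G μ)
    (hVpos : ∀ᵐ ω ∂μ, 0 < V ω) (hintF : Integrable (fun ω => V ω * ∑ i, F ω i ^ 2) μ)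
    (hintG : Integrable (fun ω => (∑ j, G ω j ^ 2) / V ω) μ) :
    ∃ (u : m → Lp ℝ 2 μ) (w : n → Lp ℝ 2 μ),
      gram ℝ u = weightedMoment μ V F F ∧ crossGram ℝ u w = weightedMoment μ 1 F G ∧
      crossGram ℝ w u = weightedMoment μ 1 G F ∧ gram ℝ w = weightedMoment μ V⁻¹ G G := by
  let s : Ω → ℝ := fun ω => √(V ω)
  have hs : AEMeasurable s μ := hV.sqrt
  have hss : s * s =ᵐ[μ] V := hVpos.mono fun ω hω => Real.mul_self_sqrt hω.le
  have hs_inv : s * s⁻¹ =ᵐ[μ] 1 := hVpos.mono fun ω hω => mul_inv_cancel₀ (Real.sqrt_pos.2 hω).ne'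
  have hinv_inv : s⁻¹ * s⁻¹ =ᵐ[μ] V⁻¹ := by simpa only [mul_inv] using hss.inv
  have hu := memLp_two_mul_of_integrable hs hF hss hintF
  have hw := memLp_two_mul_of_integrable hs.inv hG hinv_inv
    (by simpa only [Pi.inv_apply, inv_mul_eq_div] using hintG)
  exact ⟨fun i => (hu i).toLp, fun j => (hw j).toLp, crossGram_toLp_mul hu hu hss,
    crossGram_toLp_mul hu hw hs_inv, crossGram_toLp_mul hw hu (by rwa [mul_comm]),
    crossGram_toLp_mul hw hw hinv_inv⟩

theorem posSemidef_weightedMoment_sub [Fintype m] [Fintype n] [DecidableEq n]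
    (hV : AEMeasurable V μ) (hF : AEMeasurable F μ) (hG : AEMeasurable G μ)
    (hVpos : ∀ᵐ ω ∂μ, 0 < V ω) (hintF : Integrable (fun ω => V ω * ∑ i, F ω i ^ 2) μ)
    (hintG : Integrable (fun ω => (∑ j, G ω j ^ 2) / V ω) μ)
    (hN : (weightedMoment μ V⁻¹ G G).PosDef) :
    (weightedMoment μ V F F - weightedMoment μ 1 F G * (weightedMoment μ V⁻¹ G G)⁻¹ *
      weightedMoment μ 1 G F).PosSemidef := by
  obtain ⟨u, w, huu, huw, hwu, hww⟩ :=
    exists_crossGram_eq_weightedMoment hV hF hG hVpos hintF hintG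
  rw [← hww] at hN ⊢
  rw [← huu, ← huw, ← hwu]
  exact posSemidef_gram_sub_crossGram u hN

end WeightedMoment

section SandwichVariance

variable {Ω m n : Type*} [MeasurableSpace Ω] [Fintype n] [DecidableEq n] {μ : Measure Ω}
  {V : Ω → ℝ} {F G : Ω → n → ℝ}

/-- The variance `A⁻¹ E[V F Fᵀ] (A⁻¹)ᵀ`, where `A = E[F Gᵀ]`, of the GMM estimator with instrument
`F`. It is meaningful only for invertible `A`: otherwise `A⁻¹ = 0`. -/
def sandwichVariance (μ : Measure Ω) (V : Ω → ℝ) (F G : Ω → n → ℝ) : Matrix n n ℝ :=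
  (weightedMoment μ 1 F G)⁻¹ * weightedMoment μ V F F * (weightedMoment μ 1 F G)⁻¹ᵀ

theorem posDef_weightedMoment_inv_of_isUnit_det
    (hV : AEMeasurable V μ) (hF : AEMeasurable F μ) (hG : AEMeasurable G μ)
    (hVpos : ∀ᵐ ω ∂μ, 0 < V ω) (hintF : Integrable (fun ω => V ω * ∑ i, F ω i ^ 2) μ)
    (hintG : Integrable (fun ω => (∑ j, G ω j ^ 2) / V ω) μ)
    (hA : IsUnit (weightedMoment μ 1 F G).det) : (weightedMoment μ V⁻¹ G G).PosDef := by
  obtain ⟨u, w, -, huw, -, hww⟩ :=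
    exists_crossGram_eq_weightedMoment hV hF hG hVpos hintF hintG
  rw [← huw] at hA
  rw [← hww]
  exact posDef_gram_of_injective_crossGram_mulVec (mulVec_injective_of_det_ne_zero hA.ne_zero)

theorem posSemidef_sandwichVariance_sub
    (hV : AEMeasurable V μ) (hF : AEMeasurable F μ) (hG : AEMeasurable G μ)
    (hVpos : ∀ᵐ ω ∂μ, 0 < V ω) (hintF : Integrable (fun ω => V ω * ∑ i, F ω i ^ 2) μ)
    (hintG : Integrable (fun ω => (∑ j, G ω j ^ 2) / V ω) μ)
    (hA : IsUnit (weightedMoment μ 1 F G).det) :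
    (sandwichVariance μ V F G - (weightedMoment μ V⁻¹ G G)⁻¹).PosSemidef := by
  have hN := posDef_weightedMoment_inv_of_isUnit_det hV hF hG hVpos hintF hintG hA
  have h := posSemidef_weightedMoment_sub hV hF hG hVpos hintF hintG hN
  rw [← transpose_weightedMoment 1 F G, ← conjTranspose_eq_transpose_of_trivial] at h
  exact posSemidef_inv_mul_mul_conjTranspose_inv_sub hA h

theorem sandwichVariance_eq_inv
    (hVpos : ∀ᵐ ω ∂μ, 0 < V ω) (hA : IsUnit (weightedMoment μ 1 F G).det)
    (hFG : ∀ᵐ ω ∂μ, F ω = fun i => G ω i / V ω) :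
    sandwichVariance μ V F G = (weightedMoment μ V⁻¹ G G)⁻¹ := by
  have hA_eq : weightedMoment μ 1 F G = weightedMoment μ V⁻¹ G G := by
    refine weightedMoment_congr (hFG.mono fun ω hω i j => ?_)
    simp only [hω, Pi.one_apply, Pi.inv_apply]
    ring
  have hB_eq : weightedMoment μ V F F = weightedMoment μ V⁻¹ G G := by
    refine weightedMoment_congr ?_
    filter_upwards [hFG, hVpos] with ω hω hVω i j
    simp only [hω, Pi.inv_apply]
    field_simp
  rw [hA_eq] at hA
  rw [sandwichVariance, hA_eq, hB_eq]
  exact inv_mul_mul_conjTranspose_inv_self (isHermitian_weightedMoment V⁻¹ G) hA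

theorem gmm_efficiency_bound_general [Fintype m] {F : Ω → m → ℝ}
    (hV : AEMeasurable V μ) (hF : AEMeasurable F μ) (hG : AEMeasurable G μ)
    (hVpos : ∀ᵐ ω ∂μ, 0 < V ω) (hintF : Integrable (fun ω => V ω * ∑ i, F ω i ^ 2) μ)
    (hintG : Integrable (fun ω => (∑ j, G ω j ^ 2) / V ω) μ) :
    ((weightedMoment μ V⁻¹ G G).PosDef →
      (weightedMoment μ V F F - weightedMoment μ 1 F G * (weightedMoment μ V⁻¹ G G)⁻¹ *
        weightedMoment μ 1 G F).PosSemidef) ∧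
      ∀ F' : Ω → n → ℝ, AEMeasurable F' μ →
        Integrable (fun ω => V ω * ∑ i, F' ω i ^ 2) μ →
        IsUnit (weightedMoment μ 1 F' G).det →
        (sandwichVariance μ V F' G - (weightedMoment μ V⁻¹ G G)⁻¹).PosSemidef ∧
          ((∀ᵐ ω ∂μ, F' ω = fun i => G ω i / V ω) →
            sandwichVariance μ V F' G = (weightedMoment μ V⁻¹ G G)⁻¹) :=
  ⟨posSemidef_weightedMoment_sub hV hF hG hVpos hintF hintG, fun _ hF' hintF' hA =>
    ⟨posSemidef_sandwichVariance_sub hV hF' hG hVpos hintF' hintG hA,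
      sandwichVariance_eq_inv hVpos hA⟩⟩

end SandwichVariance

/-- matrix Cauchy–Schwarz / GMM efficiency bound underlying Theorem 17:
`E[V F Fᵀ] − E[F Gᵀ] N⁻¹ E[G Fᵀ]` is positive semidefinite where `N = E[G Gᵀ / V]`;
consequently, in the square case the GMM sandwich variance with instrument `F` is
bounded below in the Loewner order by `N⁻¹`, with equality when `F = G / V` a.s. -/
theorem gmm_efficiency_bound
    {Ω : Type*} [MeasurableSpace Ω] (Pm : Measure Ω) [IsProbabilityMeasure Pm]
    (k d : ℕ)
    (V : Ω → ℝ) (F : Ω → Fin k → ℝ) (G : Ω → Fin d → ℝ)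
    (hV : Measurable V) (hF : Measurable F) (hG : Measurable G)
    (hVpos : ∀ᵐ ω ∂Pm, 0 < V ω)
    (hintF : Integrable (fun ω => V ω * ∑ i, F ω i ^ 2) Pm)
    (hintG : Integrable (fun ω => (∑ j, G ω j ^ 2) / V ω) Pm)
    (hintFG : Integrable (fun ω =>
      Real.sqrt (∑ i, F ω i ^ 2) * Real.sqrt (∑ j, G ω j ^ 2)) Pm)
    (N : Matrix (Fin d) (Fin d) ℝ)
    (hN : N = Matrix.of fun i j => ∫ ω, G ω i * G ω j / V ω ∂Pm)
    (hNpd : N.PosDef)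
    (EVFF : Matrix (Fin k) (Fin k) ℝ)
    (hEVFF : EVFF = Matrix.of fun i j => ∫ ω, V ω * (F ω i * F ω j) ∂Pm)
    (EFG : Matrix (Fin k) (Fin d) ℝ)
    (hEFG : EFG = Matrix.of fun i j => ∫ ω, F ω i * G ω j ∂Pm)
    (EGF : Matrix (Fin d) (Fin k) ℝ)
    (hEGF : EGF = Matrix.of fun i j => ∫ ω, G ω i * F ω j ∂Pm) :
    (EVFF - EFG * N⁻¹ * EGF).PosSemidef ∧
      ∀ F' : Ω → Fin d → ℝ, Measurable F' →
        Integrable (fun ω => V ω * ∑ i, F' ω i ^ 2) Pm →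
        Integrable (fun ω =>
          Real.sqrt (∑ i, F' ω i ^ 2) * Real.sqrt (∑ j, G ω j ^ 2)) Pm →
        ∀ A EVF'F' : Matrix (Fin d) (Fin d) ℝ,
          A = Matrix.of (fun i j => ∫ ω, F' ω i * G ω j ∂Pm) →
          EVF'F' = Matrix.of (fun i j => ∫ ω, V ω * (F' ω i * F' ω j) ∂Pm) →
          IsUnit A.det →
          (A⁻¹ * EVF'F' * (A⁻¹)ᵀ - N⁻¹).PosSemidef ∧
            ((∀ᵐ ω ∂Pm, F' ω = fun i => G ω i / V ω) →
              A⁻¹ * EVF'F' * (A⁻¹)ᵀ = N⁻¹) := by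
  subst hN hEVFF hEFG hEGF
  simp only [← weightedMoment_one, ← weightedMoment_inv] at hNpd ⊢
  obtain ⟨hbound, hsandwich⟩ := gmm_efficiency_bound_general hV.aemeasurable hF.aemeasurable
    hG.aemeasurable hVpos hintF hintG
  refine ⟨hbound hNpd, ?_⟩
  rintro F' hF' hintF' - _ _ rfl rfl
  exact hsandwich F' hF'.aemeasurable hintF'

end
end
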